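/- arXiv:1705.09756 — 2 statements merged into one kernel-verified Lean document; each statement's English description precedes it below -/
import Mathlib

section
/- For every y ∈ int(Δ_n) with n ≥ 3 and every index i, there holds y_i + ∑_{j ≠ i} (y_i/(1 − y_j))·y_j < 1. Consequently, the matrix H(y) with entries H_{ii} = y_i and H_{ij} = −y_i y_j/(1 − y_i) for j ≠ i satisfies ‖H(y)‖₁ < 1, where ‖·‖₁ denotes the maximum absolute column sum matrix norm. -/
/-! Since `n ≥ 3` and all coordinates are positive, `y i + y j < 1` for `j ≠ i`: a third
coordinate takes up part of the total mass. Hence every weight `y i / (1 - y j)` is `< 1`, and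
the sum in question is strictly below `y i + ∑_{j ≠ i} y j = 1`. The `i`-th absolute column sum
of `H(y)` is this same sum. -/

open Finset

/-- The DeGroot-Friedkin map: `F(x)_i = α(x) · γ_i/(1 - x_i)` with
`α(x) = (∑_j γ_j/(1 - x_j))⁻¹`. -/
noncomputable def DF {n : ℕ} (γ : Fin n → ℝ) (x : Fin n → ℝ) : Fin n → ℝ :=
  fun i => (∑ j, γ j / (1 - x j))⁻¹ * (γ i / (1 - x i))

/-- The simplex Δₙ. -/
def simplex (n : ℕ) : Set (Fin n → ℝ) := {x | (∀ i, 0 ≤ x i) ∧ ∑ i, x i = 1}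

/-- The interior int(Δₙ) of the simplex. -/
def intSimplex (n : ℕ) : Set (Fin n → ℝ) := {x | (∀ i, 0 < x i) ∧ ∑ i, x i = 1}

/-- The standard basis vector (vertex of the simplex) eᵢ. -/
def vertex {n : ℕ} (i : Fin n) : Fin n → ℝ := fun j => if j = i then 1 else 0

/-- The punctured simplex Δ̃ₙ = Δₙ \ {e₁, …, eₙ}. -/
def punctSimplex (n : ℕ) : Set (Fin n → ℝ) := simplex n \ (⋃ i, {vertex i})

/-- The 1-norm ‖x‖₁ = ∑ i, |x i|. -/
noncomputable def norm1 {n : ℕ} (x : Fin n → ℝ) : ℝ := ∑ i, |x i|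

open Matrix

/-- The matrix H(y) with entries H_{ii} = y_i and H_{ij} = −y_i y_j/(1 − y_i)
for j ≠ i. -/
noncomputable def HMat {n : ℕ} (y : Fin n → ℝ) : Matrix (Fin n) (Fin n) ℝ :=
  Matrix.of fun i j => if i = j then y i else -(y i * y j) / (1 - y i)

/-- This is where `n ≥ 3` enters: for `n = 2` the two coordinates sum to exactly `1`. -/
theorem add_lt_one_of_mem_intSimplex {n : ℕ} (hn : 3 ≤ n) {y : Fin n → ℝ}
    (hy : y ∈ intSimplex n) {i j : Fin n} (hij : j ≠ i) : y i + y j < 1 := by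
  obtain ⟨hpos, hsum⟩ := hy
  obtain ⟨k, hk⟩ : ∃ k, k ∉ ({i, j} : Finset (Fin n)) := by
    by_contra! h
    have h1 : (Finset.univ : Finset (Fin n)).card ≤ ({i, j} : Finset (Fin n)).card :=
      Finset.card_le_card fun k _ => h k
    have h2 := Finset.card_le_two (a := i) (b := j)
    rw [Finset.card_univ, Fintype.card_fin] at h1
    omega
  rw [← Finset.sum_pair hij.symm, ← hsum]
  exact Finset.sum_lt_sum_of_subset (Finset.subset_univ _) (Finset.mem_univ k) hk (hpos k)
    fun l _ _ => (hpos l).le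

/-- for every y ∈ int(Δₙ) with n ≥ 3 and every i,
y_i + ∑_{j≠i} (y_i/(1 − y_j))·y_j < 1; consequently every column absolute sum of
H(y) is < 1, i.e. ‖H(y)‖₁ < 1 for the maximum-absolute-column-sum norm. -/
theorem stmt6 {n : ℕ} (hn : 3 ≤ n) (y : Fin n → ℝ) (hy : y ∈ intSimplex n) :
    (∀ i, y i + ∑ j ∈ Finset.univ.erase i, (y i / (1 - y j)) * y j < 1) ∧
    (∀ i, ∑ j, |HMat y j i| < 1) := by
  have hlt := fun (i j : Fin n) (hij : j ≠ i) => add_lt_one_of_mem_intSimplex hn hy hij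
  obtain ⟨hpos, hsum⟩ := hy
  have key : ∀ i, y i + ∑ j ∈ Finset.univ.erase i, (y i / (1 - y j)) * y j < 1 := by
    intro i
    refine lt_of_lt_of_eq ?_ ((Finset.add_sum_erase _ y (Finset.mem_univ i)).trans hsum)
    gcongr 1
    refine Finset.sum_lt_sum_of_nonempty ?_ fun j hj => ?_
    · rw [← Finset.card_pos, Finset.card_erase_of_mem (Finset.mem_univ i), Finset.card_univ,
        Fintype.card_fin]
      omega
    · have h := hlt i j (Finset.ne_of_mem_erase hj)
      have hi := hpos i
      exact mul_lt_of_lt_one_left (hpos j) ((div_lt_one (by linarith)).2 (by linarith))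
  refine ⟨key, fun i => ?_⟩
  convert key i using 1
  rw [← Finset.add_sum_erase _ _ (Finset.mem_univ i)]
  congr 1
  · simp [HMat, abs_of_pos (hpos i)]
  · refine Finset.sum_congr rfl fun j hj => ?_
    have hji := Finset.ne_of_mem_erase hj
    have h := hlt i j hji
    have hi := hpos i
    have hd : 0 < 1 - y j := by linarith
    simp only [HMat, Matrix.of_apply, if_neg hji]
    rw [abs_div, abs_neg, abs_of_pos (mul_pos (hpos j) hi), abs_of_pos hd]
    ring
end

section
/- Consider two DeGroot-Friedkin maps F₁, F₂ (parametrized by γ₁, γ₂ with positive entries summing to 1 and maximum entry < 1/2), and the 2-periodic system x(s+1) = F₂(x(s)) for even s and x(s+1) = F₁(x(s)) for odd s. Then: (i) the composition G₁ = F₁ ∘ F₂ has a unique fixed point y₁* ∈ int(Δ_n) and the composition G₂ = F₂ ∘ F₁ has a unique fixed point y₂* ∈ int(Δ_n); (ii) these are intertwined: y₂* = F₂(y₁*) and y₁* = F₁(y₂*); (iii) for every initial condition x(0) ∈ Δ̃_n, the even subsequence x(2q) converges to y₁* and the odd subsequence x(2q+1) converges to y₂* exponentially fast as q → ∞ (i.e.,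 there exist M > 0 and ρ ∈ (0,1) with ‖x(2q) − y₁*‖₁ ≤ M·ρ^q and ‖x(2q+1) − y₂*‖₁ ≤ M·ρ^q). -/
/-!
Existence, uniqueness and convergence all rest on one contraction estimate.
For points `x, y` with all coordinates below `1`, set
`r i = (1 - y i) / (1 - x i)`; the quantity `max r / min r - 1` is a multiplicative (Hilbert-metric
type) distance, and `Close δ x y` says that it is at most `δ`. Put `p = F x` and `q = F y`. Then
`p i / q i` is proportional to `r i`, so `p / q` has the same spread, `m q ≤ p ≤ (1 + δ) m q` with
`m = min (p / q)`. Replacing `q i, p i` by `1 - q i, 1 - p i = ∑_{j ≠ i} p j` averages these ratios,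
and a direct computation bounds the new distance by the maximum of `(q i + q k) δ` over `i ≠ k`.
As `n ≥ 3`, `q i + q k ≤ 1 - c` when all coordinates of `q` are at least `c`: one step of `F` contracts the
distance by `1 - c` (`close_DF`), where `c` depends on `F y` only.

Existence of a fixed point of `F₁ ∘ F₂`: the condition `γ i < 1 / 2` makes the sets
`{x ∈ Δₙ | x i ≤ 1 - r}` with small `r` invariant under both maps (`box_DF`), and there
`F x l ≥ r γ l` uniformly. Hence the orbit of `γ₁` is geometrically Cauchy and its limit is fixed.
Convergence: comparing an arbitrary orbit with the periodic orbit `y₁, y₂` uses `close_DF`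
for the map `F₁`, with `c` a lower bound of the coordinates of `y₁ = F₁ y₂`, and only the
nonexpansive case `c = 0` for `F₂`. Uniqueness follows from convergence.
-/

open Finset

/-! ### The contraction estimate -/

/-- The ratios `(1 - y i) / (1 - x i)` differ from each other by a factor of at most `1 + δ`,
written without division. -/
def Close {n : ℕ} (δ : ℝ) (x y : Fin n → ℝ) : Prop :=
  ∀ i k, (1 - y i) * (1 - x k) ≤ (1 + δ) * ((1 - x i) * (1 - y k))

lemma sum_div_pos {n : ℕ} (hn : 3 ≤ n) {γ x : Fin n → ℝ} (hγ : ∀ i, 0 < γ i) (hx : ∀ i, x i < 1) :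
    0 < ∑ j, γ j / (1 - x j) := by
  have : Nonempty (Fin n) := ⟨⟨0, by omega⟩⟩
  exact Finset.sum_pos (fun j _ => div_pos (hγ j) (by linarith [hx j])) Finset.univ_nonempty

lemma DF_mem {n : ℕ} (hn : 3 ≤ n) {γ x : Fin n → ℝ} (hγ : ∀ i, 0 < γ i) (hx : ∀ i, x i < 1) :
    DF γ x ∈ intSimplex n := by
  have hS := sum_div_pos hn hγ hx
  refine ⟨fun i => mul_pos (inv_pos.2 hS) (div_pos (hγ i) (by linarith [hx i])), ?_⟩
  simp only [DF]
  rw [← Finset.mul_sum]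
  exact inv_mul_cancel₀ hS.ne'

lemma lt_one_of_mem {n : ℕ} (hn : 3 ≤ n) {x : Fin n → ℝ} (hx : x ∈ intSimplex n) (i : Fin n) :
    x i < 1 := by
  obtain ⟨hpos, hsum⟩ := hx
  have : Nontrivial (Fin n) := Fin.nontrivial_iff_two_le.2 (by omega)
  obtain ⟨j, hj⟩ := exists_ne i
  have := Finset.add_le_sum (s := Finset.univ) (f := x) (fun i _ => (hpos i).le)
    (Finset.mem_univ i) (Finset.mem_univ j) hj.symm
  linarith [hpos j]

/-- With a third coordinate available, two distinct coordinates sum to at most `1 - c`. -/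
lemma pair_le {n : ℕ} (hn : 3 ≤ n) {q : Fin n → ℝ} {c : ℝ} (hq : q ∈ intSimplex n)
    (hc : ∀ i, c ≤ q i) {i k : Fin n} (hik : i ≠ k) : q i + q k ≤ 1 - c := by
  obtain ⟨hpos, hsum⟩ := hq
  obtain ⟨l, hl⟩ : ∃ l, l ∉ ({i, k} : Finset (Fin n)) := by
    by_contra! h
    have h2 := Finset.card_le_two (a := i) (b := k)
    rw [Finset.eq_univ_of_forall h, Finset.card_univ, Fintype.card_fin] at h2
    omega
  have h3 := Finset.sum_le_sum_of_subset_of_nonneg (f := q)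
    (Finset.subset_univ (insert l ({i, k} : Finset (Fin n)))) (fun j _ _ => (hpos j).le)
  rw [Finset.sum_insert hl, Finset.sum_pair hik, hsum] at h3
  linarith [hc l]

/-- The averaging step: complements `1 - p`, `1 - q` are closer than the ratios `p / q`. -/
lemma close_compl {n : ℕ} (hn : 3 ≤ n) {p q : Fin n → ℝ} {c δ : ℝ} (hδ : 0 ≤ δ)
    (hp : p ∈ intSimplex n) (hq : q ∈ intSimplex n) (hc : ∀ i, c ≤ q i)
    (h : ∀ i k, p i * q k ≤ (1 + δ) * (p k * q i)) : Close ((1 - c) * δ) p q := by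
  have : Nonempty (Fin n) := ⟨⟨0, by omega⟩⟩
  intro i k
  have hp1 := lt_one_of_mem hn hp
  have hq1 := lt_one_of_mem hn hq
  rcases eq_or_ne i k with rfl | hik
  · have h1 : 0 ≤ (1 - c) * δ := mul_nonneg (by linarith [hc i, hq1 i]) hδ
    have h2 : 0 ≤ (1 - p i) * (1 - q i) :=
      mul_nonneg (by linarith [hp1 i]) (by linarith [hq1 i])
    nlinarith [mul_nonneg h1 h2]
  obtain ⟨l, -, hl⟩ := Finset.exists_min_image Finset.univ (fun j => p j / q j)
    Finset.univ_nonempty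
  obtain ⟨m, hm⟩ : ∃ m, m = p l / q l := ⟨_, rfl⟩
  have hm0 : 0 < m := hm ▸ div_pos (hp.1 l) (hq.1 l)
  have lo : ∀ j, m * q j ≤ p j := fun j => by
    have := hl j (Finset.mem_univ j)
    rw [← hm] at this
    exact (le_div_iff₀ (hq.1 j)).1 this
  have up : ∀ j, p j ≤ (1 + δ) * m * q j := fun j => by
    have h1 := h j l
    have h2 : p l = m * q l := by rw [hm, div_mul_cancel₀ _ (hq.1 l).ne']
    rw [h2] at h1
    have h3 := hq.1 l
    refine le_of_mul_le_mul_right ?_ h3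
    linarith
  have comp : ∀ (f : Fin n → ℝ), ∑ j, f j = 1 → ∀ a, ∑ j ∈ Finset.univ.erase a, f j = 1 - f a := by
    intro f hf a
    rw [← hf, ← Finset.sum_erase_add _ _ (Finset.mem_univ a)]
    ring
  have lo' : ∀ a, m * (1 - q a) ≤ 1 - p a := fun a => by
    rw [← comp q hq.2, ← comp p hp.2, Finset.mul_sum]
    exact Finset.sum_le_sum fun j _ => lo j
  have up' : ∀ a, 1 - p a ≤ (1 + δ) * m * (1 - q a) := fun a => by
    rw [← comp q hq.2, ← comp p hp.2, Finset.mul_sum]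
    exact Finset.sum_le_sum fun j _ => up j
  have hi : p i - q i ≤ δ * m * q i * (1 - q i) := by
    nlinarith [mul_le_mul_of_nonneg_right (up i) (by linarith [hq1 i] : 0 ≤ 1 - q i),
      mul_le_mul_of_nonneg_left (lo' i) (hq.1 i).le]
  have hk : q k - p k ≤ δ * m * q k * (1 - q k) := by
    nlinarith [mul_le_mul_of_nonneg_right (lo k) (by linarith [hq1 k] : 0 ≤ 1 - q k),
      mul_le_mul_of_nonneg_left (up' k) (hq.1 k).le]
  have hs := pair_le hn hq hc hik
  have hqi : 0 ≤ 1 - q i := by linarith [hq1 i]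
  have hqk : 0 ≤ 1 - q k := by linarith [hq1 k]
  have hc1 : 0 ≤ 1 - c := by linarith [hq.1 i, hq.1 k]
  calc (1 - q i) * (1 - p k)
      = (1 - p i) * (1 - q k) + ((1 - q k) * (p i - q i) + (1 - q i) * (q k - p k)) := by ring
    _ ≤ (1 - p i) * (1 - q k) + ((1 - q k) * (δ * m * q i * (1 - q i))
          + (1 - q i) * (δ * m * q k * (1 - q k))) := by gcongr
    _ = (1 - p i) * (1 - q k) + (q i + q k) * (δ * (m * (1 - q i)) * (1 - q k)) := by ring
    _ ≤ (1 - p i) * (1 - q k) + (1 - c) * (δ * (1 - p i) * (1 - q k)) := by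
        gcongr
        exact lo' i
    _ = (1 + (1 - c) * δ) * ((1 - p i) * (1 - q k)) := by ring

/-- One step of a DeGroot-Friedkin map contracts closeness by `1 - c`. -/
lemma close_DF {n : ℕ} (hn : 3 ≤ n) {γ x y : Fin n → ℝ} {c δ : ℝ} (hδ : 0 ≤ δ)
    (hγ : ∀ i, 0 < γ i) (hx : ∀ i, x i < 1) (hy : ∀ i, y i < 1)
    (hc : ∀ i, c ≤ DF γ y i) (h : Close δ x y) :
    Close ((1 - c) * δ) (DF γ x) (DF γ y) := by
  refine close_compl hn hδ (DF_mem hn hγ hx) (DF_mem hn hγ hy) hc fun i k => ?_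
  have hSx := sum_div_pos hn hγ hx
  have hSy := sum_div_pos hn hγ hy
  simp only [DF]
  set A := ∑ j, γ j / (1 - x j)
  set B := ∑ j, γ j / (1 - y j)
  have hxi : 0 < 1 - x i := by linarith [hx i]
  have hxk : 0 < 1 - x k := by linarith [hx k]
  have hyi : 0 < 1 - y i := by linarith [hy i]
  have hyk : 0 < 1 - y k := by linarith [hy k]
  have e1 : A⁻¹ * (γ i / (1 - x i)) * (B⁻¹ * (γ k / (1 - y k))) =
      (A⁻¹ * B⁻¹ * γ i * γ k / ((1 - x i) * (1 - x k) * (1 - y i) * (1 - y k))) *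
        ((1 - y i) * (1 - x k)) := by
    field_simp
  have e2 : (1 + δ) * (A⁻¹ * (γ k / (1 - x k)) * (B⁻¹ * (γ i / (1 - y i)))) =
      (A⁻¹ * B⁻¹ * γ i * γ k / ((1 - x i) * (1 - x k) * (1 - y i) * (1 - y k))) *
        ((1 + δ) * ((1 - x i) * (1 - y k))) := by
    field_simp
  rw [e1, e2]
  have hi := hγ i
  have hk := hγ k
  exact mul_le_mul_of_nonneg_left (h i k) (by positivity)

lemma abs_le_of_close {n : ℕ} (hn : 3 ≤ n) {x y : Fin n → ℝ} {δ : ℝ} (hδ : 0 ≤ δ)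
    (hx : x ∈ simplex n) (hy : y ∈ simplex n) (h : Close δ x y) (i : Fin n) :
    |x i - y i| ≤ δ := by
  have hn' : (0 : ℝ) < n - 1 := by
    have : (3 : ℝ) ≤ n := by exact_mod_cast hn
    linarith
  have sx : ∑ k, (1 - x k) = n - 1 := by simp [Finset.sum_sub_distrib, hx.2]
  have sy : ∑ k, (1 - y k) = n - 1 := by simp [Finset.sum_sub_distrib, hy.2]
  have h1 : 1 - y i ≤ (1 + δ) * (1 - x i) := by
    have := Finset.sum_le_sum fun k (_ : k ∈ Finset.univ) => h i k
    simp only [← Finset.mul_sum, sx, sy] at this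
    refine le_of_mul_le_mul_right ?_ hn'
    linarith
  have h2 : 1 - x i ≤ (1 + δ) * (1 - y i) := by
    have := Finset.sum_le_sum fun k (_ : k ∈ Finset.univ) => h k i
    simp only [← Finset.mul_sum, ← Finset.sum_mul, sx, sy] at this
    refine le_of_mul_le_mul_right ?_ hn'
    linarith
  rw [abs_le]
  constructor <;> nlinarith [mul_nonneg hδ (hx.1 i), mul_nonneg hδ (hy.1 i)]

lemma exists_close {n : ℕ} {x y : Fin n → ℝ} (hx : ∀ i, x i < 1) (hy : ∀ i, y i < 1) :
    ∃ δ : ℝ, 0 ≤ δ ∧ Close δ x y := by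
  have hnn : ∀ i k, 0 ≤ (1 - y i) * (1 - x k) / ((1 - x i) * (1 - y k)) := fun i k =>
    div_nonneg (mul_nonneg (by linarith [hy i]) (by linarith [hx k]))
      (mul_nonneg (by linarith [hx i]) (by linarith [hy k]))
  refine ⟨∑ i, ∑ k, (1 - y i) * (1 - x k) / ((1 - x i) * (1 - y k)),
    Finset.sum_nonneg fun i _ => Finset.sum_nonneg fun k _ => hnn i k, fun i k => ?_⟩
  have hpos : 0 < (1 - x i) * (1 - y k) := mul_pos (by linarith [hx i]) (by linarith [hy k])
  rw [← div_le_iff₀ hpos]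
  have h1 := Finset.single_le_sum (f := fun k => (1 - y i) * (1 - x k) / ((1 - x i) * (1 - y k)))
    (fun k _ => hnn i k) (Finset.mem_univ k)
  have h2 := Finset.single_le_sum
    (f := fun i => ∑ k, (1 - y i) * (1 - x k) / ((1 - x i) * (1 - y k)))
    (fun i _ => Finset.sum_nonneg fun k _ => hnn i k) (Finset.mem_univ i)
  linarith

/-! ### Existence of a fixed point -/

/-- Truncated simplices are invariant, because `γ i < 1 / 2`. -/
lemma box_DF {n : ℕ} (hn : 3 ≤ n) {γ x : Fin n → ℝ} {r : ℝ} (hr : 0 < r)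
    (hγ : ∀ i, 0 < γ i) (hsum : ∑ i, γ i = 1) (hrγ : ∀ i, r ≤ 1 - 2 * γ i)
    (hx : x ∈ intSimplex n) (hxr : ∀ i, x i ≤ 1 - r) (i : Fin n) : DF γ x i ≤ 1 - r := by
  have hx1 : ∀ i, x i < 1 := fun i => by linarith [hxr i]
  have hS := sum_div_pos hn hγ hx1
  have hrest : 1 - γ i ≤ ∑ j ∈ Finset.univ.erase i, γ j / (1 - x j) := by
    have hs := Finset.sum_erase_add Finset.univ γ (Finset.mem_univ i)
    rw [hsum] at hs
    rw [← hs, add_sub_cancel_right]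
    refine Finset.sum_le_sum fun j _ => ?_
    rw [le_div_iff₀ (by linarith [hx1 j])]
    nlinarith [hγ j, hx.1 j, mul_pos (hγ j) (hx.1 j)]
  have hSe := Finset.sum_erase_add Finset.univ (fun j => γ j / (1 - x j)) (Finset.mem_univ i)
  have ht : r * (γ i / (1 - x i)) ≤ γ i := by
    rw [← mul_div_assoc, div_le_iff₀ (by linarith [hx1 i])]
    nlinarith [hγ i, hxr i]
  have hr1 : r < 1 := by linarith [hrγ i, hγ i]
  simp only [DF]
  rw [inv_mul_le_iff₀ hS, ← hSe]
  nlinarith [hrγ i, mul_le_mul_of_nonneg_left hrest (sub_nonneg.2 hr1.le), hγ i,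
    mul_pos hr (hγ i)]

lemma lower_DF {n : ℕ} (hn : 3 ≤ n) {γ x : Fin n → ℝ} {r : ℝ} (hr : 0 < r)
    (hγ : ∀ i, 0 < γ i) (hsum : ∑ i, γ i = 1)
    (hx : x ∈ intSimplex n) (hxr : ∀ i, x i ≤ 1 - r) (i : Fin n) : r * γ i ≤ DF γ x i := by
  have hx1 : ∀ i, x i < 1 := fun i => by linarith [hxr i]
  have hS := sum_div_pos hn hγ hx1
  have hle : r * ∑ j, γ j / (1 - x j) ≤ 1 := by
    rw [Finset.mul_sum]
    refine le_trans ?_ hsum.le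
    refine Finset.sum_le_sum fun j _ => ?_
    rw [← mul_div_assoc, div_le_iff₀ (by linarith [hx1 j])]
    nlinarith [hγ j, hxr j]
  have h1 : γ i ≤ γ i / (1 - x i) := by
    rw [le_div_iff₀ (by linarith [hx1 i])]
    nlinarith [mul_pos (hγ i) (hx.1 i)]
  simp only [DF]
  rw [← div_eq_inv_mul, le_div_iff₀ hS]
  nlinarith [mul_le_mul_of_nonneg_right hle (hγ i).le]

lemma exists_pos_le {n : ℕ} (hn : 3 ≤ n) {f : Fin n → ℝ} (hf : ∀ i, 0 < f i) :
    ∃ c, 0 < c ∧ ∀ i, c ≤ f i := by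
  have : Nonempty (Fin n) := ⟨⟨0, by omega⟩⟩
  obtain ⟨l, -, hl⟩ := Finset.exists_min_image Finset.univ f Finset.univ_nonempty
  exact ⟨f l, hf l, fun i => hl i (Finset.mem_univ i)⟩

lemma continuousAt_DF {n : ℕ} (hn : 3 ≤ n) {γ x : Fin n → ℝ} (hγ : ∀ i, 0 < γ i)
    (hx : ∀ i, x i < 1) : ContinuousAt (DF γ) x := by
  have hS := sum_div_pos hn hγ hx
  have hne : ∀ i, 1 - x i ≠ 0 := fun i => by linarith [hx i]
  have hq : ∀ j, ContinuousAt (fun x : Fin n → ℝ => γ j / (1 - x j)) x := fun j =>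
    continuousAt_const.div (continuousAt_const.sub (continuous_apply j).continuousAt) (hne j)
  refine continuousAt_pi.2 fun i => ?_
  exact ((tendsto_finsetSum _ fun j _ => hq j).inv₀ hS.ne').mul (hq i)

lemma intSimplex_subset {n : ℕ} {x : Fin n → ℝ} (hx : x ∈ intSimplex n) : x ∈ simplex n :=
  ⟨fun i => (hx.1 i).le, hx.2⟩

lemma exists_fixed {n : ℕ} (hn : 3 ≤ n) (γ₁ γ₂ : Fin n → ℝ)
    (h1pos : ∀ i, 0 < γ₁ i) (h1sum : ∑ i, γ₁ i = 1) (h1half : ∀ i, γ₁ i < 1 / 2)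
    (h2pos : ∀ i, 0 < γ₂ i) (h2sum : ∑ i, γ₂ i = 1) (h2half : ∀ i, γ₂ i < 1 / 2) :
    ∃ y ∈ intSimplex n, DF γ₁ (DF γ₂ y) = y := by
  obtain ⟨r₁, hr₁, hr₁'⟩ := exists_pos_le hn (f := fun i => 1 - 2 * γ₁ i)
    (fun i => by linarith [h1half i])
  obtain ⟨r₂, hr₂, hr₂'⟩ := exists_pos_le hn (f := fun i => 1 - 2 * γ₂ i)
    (fun i => by linarith [h2half i])
  obtain ⟨r, hr, hra, hrb⟩ : ∃ r, 0 < r ∧ r ≤ r₁ ∧ r ≤ r₂ :=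
    ⟨min r₁ r₂, lt_min hr₁ hr₂, min_le_left _ _, min_le_right _ _⟩
  obtain ⟨c₁, hc₁, hc₁'⟩ := exists_pos_le hn h1pos
  let G : (Fin n → ℝ) → Fin n → ℝ := fun x => DF γ₁ (DF γ₂ x)
  let K : Set (Fin n → ℝ) := {x | x ∈ intSimplex n ∧ ∀ i, x i ≤ 1 - r}
  have hlt : ∀ x ∈ K, ∀ i, x i < 1 := fun x hx i => by linarith [hx.2 i]
  have hK₁ : ∀ x ∈ K, DF γ₁ x ∈ K := fun x hx =>
    ⟨DF_mem hn h1pos (hlt x hx),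
      box_DF hn hr h1pos h1sum (fun i => hra.trans (hr₁' i)) hx.1 hx.2⟩
  have hK₂ : ∀ x ∈ K, DF γ₂ x ∈ K := fun x hx =>
    ⟨DF_mem hn h2pos (hlt x hx),
      box_DF hn hr h2pos h2sum (fun i => hrb.trans (hr₂' i)) hx.1 hx.2⟩
  let a : ℕ → Fin n → ℝ := fun q => G^[q] γ₁
  have ha : ∀ q, a (q + 1) = DF γ₁ (DF γ₂ (a q)) := fun q =>
    Function.iterate_succ_apply' G q γ₁
  have haK : ∀ q, a q ∈ K := by
    intro q
    induction q with
    | zero => exact ⟨⟨h1pos, h1sum⟩, fun i => by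
        have := hr₁' i
        have := h1pos i
        simp only [a, Function.iterate_zero, id] at *
        linarith⟩
    | succ q ih => rw [ha]; exact hK₁ _ (hK₂ _ ih)
  obtain ⟨δ, hδ, hclose⟩ := exists_close (hlt _ (haK 0)) (hlt _ (haK 1))
  -- `DF γ₁` maps the invariant set to points with all coordinates at least `r * c₁`
  have : Nonempty (Fin n) := ⟨⟨0, by omega⟩⟩
  let i₀ : Fin n := Classical.arbitrary _
  have low₁ : ∀ x ∈ K, ∀ i, r * c₁ ≤ DF γ₁ x i := fun x hx i =>
    (mul_le_mul_of_nonneg_left (hc₁' i) hr.le).trans (lower_DF hn hr h1pos h1sum hx.1 hx.2 i)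
  have hρ : r * c₁ < 1 := (low₁ _ (haK 0) i₀).trans_lt (hlt _ (hK₁ _ (haK 0)) i₀)
  have hρ0 : 0 < r * c₁ := mul_pos hr hc₁
  have hcl : ∀ q, Close ((1 - r * c₁) ^ q * δ) (a q) (a (q + 1)) := by
    intro q
    induction q with
    | zero => simpa using hclose
    | succ q ih =>
      have hd : 0 ≤ (1 - r * c₁) ^ q * δ := mul_nonneg (pow_nonneg (by linarith) _) hδ
      have s1 := close_DF hn (c := 0) hd h2pos (hlt _ (haK q)) (hlt _ (haK (q + 1)))
        (fun i => ((DF_mem hn h2pos (hlt _ (haK (q + 1)))).1 i).le) ih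
      rw [sub_zero, one_mul] at s1
      have s2 := close_DF hn hd h1pos (hlt _ (hK₂ _ (haK q))) (hlt _ (hK₂ _ (haK (q + 1))))
        (low₁ _ (hK₂ _ (haK (q + 1)))) s1
      rw [ha q, ha (q + 1), pow_succ', mul_assoc]
      rw [ha q] at s2 ⊢
      exact s2
  have hcauchy : CauchySeq a := by
    refine cauchySeq_of_le_geometric (1 - r * c₁) δ (by linarith) fun q => ?_
    have hd : 0 ≤ (1 - r * c₁) ^ q * δ := mul_nonneg (pow_nonneg (by linarith) _) hδ
    rw [mul_comm]
    refine (dist_pi_le_iff hd).2 fun i => ?_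
    rw [Real.dist_eq]
    exact abs_le_of_close hn hd (intSimplex_subset (haK q).1) (intSimplex_subset (haK _).1)
      (hcl q) i
  obtain ⟨y, hy⟩ := cauchySeq_tendsto_of_complete hcauchy
  have hy1 : ∀ i, y i < 1 := fun i => by
    have : y i ≤ 1 - r := le_of_tendsto' (tendsto_pi_nhds.1 hy i) fun q => (haK q).2 i
    linarith
  have hz := DF_mem hn h2pos hy1
  have hz1 := lt_one_of_mem hn hz
  have hlim : Filter.Tendsto (fun q => DF γ₁ (DF γ₂ (a q))) Filter.atTop
      (nhds (DF γ₁ (DF γ₂ y))) :=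
    (continuousAt_DF hn h1pos hz1).tendsto.comp ((continuousAt_DF hn h2pos hy1).tendsto.comp hy)
  have hlim' : Filter.Tendsto (fun q => DF γ₁ (DF γ₂ (a q))) Filter.atTop (nhds y) := by
    simp only [← ha]
    exact hy.comp (Filter.tendsto_add_atTop_nat 1)
  have hfix := tendsto_nhds_unique hlim hlim'
  exact ⟨y, hfix ▸ DF_mem hn h1pos hz1, hfix⟩

/-! ### Convergence and uniqueness -/

lemma lt_one_of_punct {n : ℕ} {x : Fin n → ℝ} (hx : x ∈ punctSimplex n) (i : Fin n) :
    x i < 1 := by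
  obtain ⟨⟨hpos, hsum⟩, hv⟩ := hx
  by_contra! h
  apply hv
  have hs := Finset.sum_erase_add Finset.univ x (Finset.mem_univ i)
  have h0 : 0 ≤ ∑ j ∈ Finset.univ.erase i, x j := Finset.sum_nonneg fun j _ => hpos j
  have hz : ∑ j ∈ Finset.univ.erase i, x j = 0 := by linarith
  rw [Finset.sum_eq_zero_iff_of_nonneg fun j _ => hpos j] at hz
  refine Set.mem_iUnion.2 ⟨i, ?_⟩
  rw [Set.mem_singleton_iff]
  funext j
  unfold vertex
  split_ifs with hj
  · subst hj
    linarith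
  · exact hz j (Finset.mem_erase.2 ⟨hj, Finset.mem_univ j⟩)

lemma orbit_converges {n : ℕ} (hn : 3 ≤ n) {γ₁ γ₂ y₁ y₂ : Fin n → ℝ}
    (h1pos : ∀ i, 0 < γ₁ i) (h2pos : ∀ i, 0 < γ₂ i)
    (hy₁ : y₁ ∈ intSimplex n) (hy₂ : y₂ ∈ intSimplex n)
    (e₂ : DF γ₂ y₁ = y₂) (e₁ : DF γ₁ y₂ = y₁)
    (x : ℕ → Fin n → ℝ) (hx0 : x 0 ∈ simplex n) (hx1 : ∀ i, x 0 i < 1)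
    (he : ∀ s, Even s → x (s + 1) = DF γ₂ (x s))
    (ho : ∀ s, Odd s → x (s + 1) = DF γ₁ (x s)) :
    ∃ M > (0 : ℝ), ∃ ρ : ℝ, 0 < ρ ∧ ρ < 1 ∧
      ∀ q : ℕ, norm1 (x (2 * q) - y₁) ≤ M * ρ ^ q ∧
               norm1 (x (2 * q + 1) - y₂) ≤ M * ρ ^ q := by
  have : Nonempty (Fin n) := ⟨⟨0, by omega⟩⟩
  have hy₁1 := lt_one_of_mem hn hy₁
  have hy₂1 := lt_one_of_mem hn hy₂
  obtain ⟨c, hc, hc'⟩ := exists_pos_le hn hy₁.1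
  have hc1 : c < 1 := (hc' (Classical.arbitrary _)).trans_lt (hy₁1 _)
  obtain ⟨δ, hδ, hcl⟩ := exists_close hx1 hy₁1
  have hd : ∀ q, 0 ≤ (1 - c) ^ q * δ := fun q => mul_nonneg (pow_nonneg (by linarith) _) hδ
  have odd_step : ∀ q, (∀ i, x (2 * q) i < 1) → Close ((1 - c) ^ q * δ) (x (2 * q)) y₁ →
      x (2 * q + 1) ∈ intSimplex n ∧ Close ((1 - c) ^ q * δ) (x (2 * q + 1)) y₂ := by
    intro q hq hclq
    rw [he _ (even_two_mul q)]
    refine ⟨DF_mem hn h2pos hq, ?_⟩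
    have s := close_DF hn (c := 0) (hd q) h2pos hq hy₁1
      (fun i => ((DF_mem hn h2pos hy₁1).1 i).le) hclq
    rwa [sub_zero, one_mul, e₂] at s
  have key : ∀ q, x (2 * q) ∈ simplex n ∧ (∀ i, x (2 * q) i < 1) ∧
      Close ((1 - c) ^ q * δ) (x (2 * q)) y₁ := by
    intro q
    induction q with
    | zero => simpa using ⟨hx0, hx1, hcl⟩
    | succ q ih =>
      obtain ⟨hz, hzc⟩ := odd_step q ih.2.1 ih.2.2
      have hz1 := lt_one_of_mem hn hz
      have e : x (2 * (q + 1)) = DF γ₁ (x (2 * q + 1)) := ho _ (odd_two_mul_add_one q)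
      rw [e]
      have hm := DF_mem hn h1pos hz1
      refine ⟨intSimplex_subset hm, lt_one_of_mem hn hm, ?_⟩
      have s := close_DF hn (c := c) (hd q) h1pos hz1 hy₂1 (by rwa [e₁]) hzc
      rwa [e₁, ← mul_assoc, ← pow_succ'] at s
  have hnorm : ∀ q (u v : Fin n → ℝ), (∀ i, |u i - v i| ≤ (1 - c) ^ q * δ) →
      norm1 (u - v) ≤ (n * δ + 1) * (1 - c) ^ q := by
    intro q u v huv
    have h1 : norm1 (u - v) ≤ ∑ _i : Fin n, (1 - c) ^ q * δ :=
      Finset.sum_le_sum fun i _ => huv i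
    rw [Finset.sum_const, Finset.card_univ, Fintype.card_fin, nsmul_eq_mul] at h1
    have h2 : 0 ≤ (1 - c) ^ q := pow_nonneg (by linarith) _
    linarith
  refine ⟨n * δ + 1, by positivity, 1 - c, by linarith, by linarith, fun q => ?_⟩
  obtain ⟨ha, hb, hq⟩ := key q
  obtain ⟨hz, hzc⟩ := odd_step q hb hq
  exact ⟨hnorm q _ _ (abs_le_of_close hn (hd q) ha (intSimplex_subset hy₁) hq),
    hnorm q _ _ (abs_le_of_close hn (hd q) (intSimplex_subset hz) (intSimplex_subset hy₂) hzc)⟩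

/-- Uniqueness: the 2-periodic orbit through another fixed point also converges to `y₁`. -/
lemma fixed_unique {n : ℕ} (hn : 3 ≤ n) {γ₁ γ₂ y₁ y₂ : Fin n → ℝ}
    (h1pos : ∀ i, 0 < γ₁ i) (h2pos : ∀ i, 0 < γ₂ i)
    (hy₁ : y₁ ∈ intSimplex n) (hy₂ : y₂ ∈ intSimplex n)
    (e₂ : DF γ₂ y₁ = y₂) (e₁ : DF γ₁ y₂ = y₁)
    (y : Fin n → ℝ) (hy : y ∈ intSimplex n) (hfix : DF γ₁ (DF γ₂ y) = y) : y = y₁ := by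
  obtain ⟨M, hM, ρ, hρ0, hρ1, h⟩ := orbit_converges hn h1pos h2pos hy₁ hy₂ e₂ e₁
    (fun s => if Even s then y else DF γ₂ y) (by simpa using intSimplex_subset hy)
    (by simpa using lt_one_of_mem hn hy)
    (fun s hs => by simp [hs, Nat.even_add_one])
    (fun s hs => by simp [Nat.not_even_iff_odd.2 hs, Nat.even_add_one, hfix])
  have hle : ∀ q, norm1 (y - y₁) ≤ M * ρ ^ q := fun q => by simpa using (h q).1
  have hlim : Filter.Tendsto (fun q => M * ρ ^ q) Filter.atTop (nhds 0) := by
    simpa using (tendsto_pow_atTop_nhds_zero_of_lt_one hρ0.le hρ1).const_mul M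
  have h0 : norm1 (y - y₁) ≤ 0 := ge_of_tendsto' hlim hle
  funext i
  have h1 := Finset.single_le_sum (f := fun i => |(y - y₁) i|)
    (fun i _ => abs_nonneg _) (Finset.mem_univ i)
  have h2 : |(y - y₁) i| ≤ 0 := h1.trans h0
  exact sub_eq_zero.1 (abs_nonpos_iff.1 h2)

/-- for the 2-periodic system x(s+1) = F₂(x(s)) (s even),
x(s+1) = F₁(x(s)) (s odd): (i) G₁ = F₁∘F₂ has a unique fixed point
y₁* ∈ int(Δₙ) and G₂ = F₂∘F₁ has a unique fixed point y₂* ∈ int(Δₙ);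
(ii) y₂* = F₂(y₁*) and y₁* = F₁(y₂*); (iii) for every x(0) ∈ Δ̃ₙ the even
subsequence converges to y₁* and the odd subsequence to y₂* exponentially. -/
theorem stmt19 {n : ℕ} (hn : 3 ≤ n) (γ₁ γ₂ : Fin n → ℝ)
    (h1pos : ∀ i, 0 < γ₁ i) (h1sum : ∑ i, γ₁ i = 1) (h1half : ∀ i, γ₁ i < 1 / 2)
    (h2pos : ∀ i, 0 < γ₂ i) (h2sum : ∑ i, γ₂ i = 1) (h2half : ∀ i, γ₂ i < 1 / 2) :
    ∃ y₁ ∈ intSimplex n, ∃ y₂ ∈ intSimplex n,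
      DF γ₁ (DF γ₂ y₁) = y₁ ∧
      (∀ y ∈ intSimplex n, DF γ₁ (DF γ₂ y) = y → y = y₁) ∧
      DF γ₂ (DF γ₁ y₂) = y₂ ∧
      (∀ y ∈ intSimplex n, DF γ₂ (DF γ₁ y) = y → y = y₂) ∧
      y₂ = DF γ₂ y₁ ∧ y₁ = DF γ₁ y₂ ∧
      ∀ x : ℕ → Fin n → ℝ, x 0 ∈ punctSimplex n →
        (∀ s, Even s → x (s + 1) = DF γ₂ (x s)) →
        (∀ s, Odd s → x (s + 1) = DF γ₁ (x s)) →
        ∃ M > (0 : ℝ), ∃ ρ : ℝ, 0 < ρ ∧ ρ < 1 ∧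
          ∀ q : ℕ, norm1 (x (2 * q) - y₁) ≤ M * ρ ^ q ∧
                   norm1 (x (2 * q + 1) - y₂) ≤ M * ρ ^ q := by
  obtain ⟨y₁, hy₁, hfix⟩ := exists_fixed hn γ₁ γ₂ h1pos h1sum h1half h2pos h2sum h2half
  have hy₂ := DF_mem hn h2pos (lt_one_of_mem hn hy₁)
  have uniq := fixed_unique hn h1pos h2pos hy₁ hy₂ rfl hfix
  refine ⟨y₁, hy₁, DF γ₂ y₁, hy₂, hfix, uniq, by rw [hfix], fun y hy hyfix => ?_, rfl, hfix.symm,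
    fun x hx he ho => orbit_converges hn h1pos h2pos hy₁ hy₂ rfl hfix x hx.1
      (lt_one_of_punct hx) he ho⟩
  -- `DF γ₁` maps fixed points of `F₂ ∘ F₁` to fixed points of `F₁ ∘ F₂`
  have := uniq (DF γ₁ y) (DF_mem hn h1pos (lt_one_of_mem hn hy)) (by rw [hyfix])
  rw [← this, hyfix]
end
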